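/- arXiv:2503.17572 — 2 statements merged into one kernel-verified Lean document; each statement's English description precedes it below -/
import Mathlib

section
/- The collections [Inf G Mon Bc] and [Inf G Mon^d Bc] are incomparable: there is a class of languages in [Inf G Mon Bc] \ [Inf G Mon^d Bc] and a class of languages in [Inf G Mon^d Bc] \ [Inf G Mon Bc]. -/
open Filter Classical

namespace InfBc

/-! ### Basic notions: r.e. sets, informants, learners -/

/-- The `e`-th recursively enumerable set (via an acceptable numbering of
partial computable functions, `W e = dom φ_e`). -/
def W (e : ℕ) : Set ℕ := {x | ((Denumerable.ofNat Nat.Partrec.Code e).eval x).Dom}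

/-- A language is recursively enumerable. -/
def RE (L : Set ℕ) : Prop := ∃ e, W e = L

abbrev Datum := ℕ × Bool
abbrev Seq := List Datum
abbrev Informant := ℕ → Datum
abbrev HypSeq := ℕ → Part ℕ
/-- Learners are partial functions; all input types are coded into `ℕ`. -/
abbrev Learner := ℕ →. ℕ
abbrev Restriction := HypSeq → Informant → Prop

/-- Positive information of an infinite sequence. -/
def posI (I : Informant) : Set ℕ := {x | ∃ n, I n = (x, true)}
/-- Negative information of an infinite sequence. -/
def negI (I : Informant) : Set ℕ := {x | ∃ n, I n = (x, false)}

/-- `I` is an informant for the language `L`. -/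
def IsInformant (I : Informant) (L : Set ℕ) : Prop := posI I = L ∧ negI I = Lᶜ

/-- `I` is an informant (for some language), i.e. `I ∈ Inf`. -/
def IsInf (I : Informant) : Prop := IsInformant I (posI I)

/-- `I` is a canonical informant. -/
def Canonical (I : Informant) : Prop := ∀ x, I x = (x, true) ∨ I x = (x, false)

/-- `I[n]`, the length-`n` initial segment of `I`. -/
def segment (I : Informant) (n : ℕ) : Seq := (List.range n).map I

/-- Positive information of a finite sequence. -/
def posS (σ : Seq) : Set ℕ := {x | (x, true) ∈ σ}
/-- Negative information of a finite sequence. -/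
def negS (σ : Seq) : Set ℕ := {x | (x, false) ∈ σ}
/-- The content of a finite sequence, as a set. -/
def contentS (σ : Seq) : Set Datum := {a | a ∈ σ}

/-! ### Interaction operators -/

abbrev InteractionOperator := Learner → Informant → HypSeq

/-- Full-information (Gold-style) interaction: `G(h,I)(i) = h(I[i])`. -/
def Gop : InteractionOperator := fun h I i => h (Encodable.encode (segment I i))

/-- Set-driven interaction: `Sd(h,I)(i) = h(content(I[i]))`. -/
def Sdop : InteractionOperator := fun h I i => h (Encodable.encode (segment I i).toFinset)

/-- The iterated evaluation of an iterative learner on a finite sequence: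
start with the initial hypothesis `h(none)` and feed the data one by one. -/
def iterExtend (h : Learner) (σ : Seq) : Part ℕ :=
  σ.foldl (fun pe a => pe.bind fun e => h (Encodable.encode (some (e, a))))
    (h (Encodable.encode (none : Option (ℕ × Datum))))

/-- Iterative interaction: `It(h,I)(i)` is obtained by feeding `I[i]` one datum
at a time, each time updating the previous hypothesis. -/
def Itop : InteractionOperator := fun h I i => iterExtend h (segment I i)

/-- An iterative learner is confluent if the order and multiplicity in which
the content is presented does not matter. -/
def ConfluentLearner (h : Learner) : Prop :=
  ∀ σ τ : Seq, contentS σ = contentS τ → iterExtend h σ = iterExtend h τ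

/-- Confluently iterative interaction. -/
noncomputable def CflItop : InteractionOperator := fun h I i =>
  if ConfluentLearner h then iterExtend h (segment I i) else Part.none

/-- `β ≼ β'`: every (partial computable) `β`-learner can be translated into a
`β'`-learner with the same hypothesis sequence on every informant. -/
def OpLe (β β' : InteractionOperator) : Prop :=
  ∀ h : Learner, Partrec h → ∃ h' : Learner, Partrec h' ∧
    ∀ I : Informant, IsInf I → ∀ n, β h I n = β' h' I n

/-! ### Learning restrictions -/

/-- The trivial restriction `T`. -/
def TT : Restriction := fun _ _ => True

/-- Explanatory identification. -/
def Ex : Restriction := fun p I =>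
  ∃ q, W q = posI I ∧ ∀ᶠ n in atTop, p n = Part.some q

/-- Behaviorally correct identification. -/
def Bc : Restriction := fun p I => ∀ᶠ n in atTop, ∃ e ∈ p n, W e = posI I

/-- Consistency of a hypothesis with a finite sequence of data. -/
def ConsH (e : ℕ) (σ : Seq) : Prop := posS σ ⊆ W e ∧ negS σ ∩ W e = ∅

/-- Consistency of a hypothesis sequence with an informant. -/
def Cons : Restriction := fun p I => ∀ n, ∃ e ∈ p n, ConsH e (segment I n)

/-- Strongly monotone. -/
def SMon : Restriction := fun p _ =>
  ∀ s t, s ≤ t → ∀ e ∈ p s, ∀ e' ∈ p t, W e ⊆ W e'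

/-- Dual strongly monotone. -/
def SMond : Restriction := fun p _ =>
  ∀ s t, s ≤ t → ∀ e ∈ p s, ∀ e' ∈ p t, W e' ⊆ W e

/-- Monotone. -/
def Mon : Restriction := fun p I =>
  ∀ s t, s ≤ t → ∀ e ∈ p s, ∀ e' ∈ p t, W e ∩ posI I ⊆ W e' ∩ posI I

/-- Dual monotone. -/
def Mond : Restriction := fun p I =>
  ∀ s t, s ≤ t → ∀ e ∈ p s, ∀ e' ∈ p t, (W e)ᶜ ∩ negI I ⊆ (W e')ᶜ ∩ negI I

/-- Weakly monotone. -/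
def WMon : Restriction := fun p I =>
  ∀ s t, s ≤ t → ∀ e ∈ p s, ConsH e (segment I t) → ∀ e' ∈ p t, W e ⊆ W e'

/-- Dual weakly monotone. -/
def WMond : Restriction := fun p I =>
  ∀ s t, s ≤ t → ∀ e ∈ p s, ConsH e (segment I t) → ∀ e' ∈ p t, W e' ⊆ W e

/-- Cautious. -/
def Caut : Restriction := fun p _ =>
  ∀ s t, s < t → ∀ e ∈ p s, ∀ e' ∈ p t, ¬ W e' ⊂ W e

/-- Target cautious. -/
def CautTar : Restriction := fun p I =>
  ∀ s, ∀ e ∈ p s, ¬ posI I ⊂ W e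

/-- Finitely cautious. -/
def CautFin : Restriction := fun p _ =>
  ∀ s t, s < t → ∀ e ∈ p s, ∀ e' ∈ p t, W e' ⊂ W e → (W e').Infinite

/-- Infinitely cautious. -/
def CautInf : Restriction := fun p _ =>
  ∀ s t, s < t → ∀ e ∈ p s, ∀ e' ∈ p t, W e' ⊂ W e → (W e').Finite

/-! ### Learnability -/

/-- The class of admissible learners: all partial computable learners. -/
def AllL : Learner → Prop := fun _ => True
/-- The class of admissible learners: total computable learners (`ℛ`). -/
def TotalL : Learner → Prop := fun h => ∀ x, (h x).Dom
/-- Admissible informants: all informants (`Inf`). -/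
def AllI : Informant → Prop := fun _ => True

/-- `h` learns `L` in the setting given by admissible informants `P`,
interaction operator `β` and local restriction `δ`. -/
def LearnsWith (P : Informant → Prop) (β : InteractionOperator) (δ : Restriction)
    (h : Learner) (L : Set ℕ) : Prop :=
  RE L ∧ ∀ I : Informant, P I → IsInformant I L → δ (β h I) I

/-- `[τ(α) C P β δ]`: the collection of all classes of languages learnable by
some learner in `C` that satisfies the global restriction `α` on all admissible
informants, under interaction operator `β` and local restriction `δ`. -/
def Learnable (α : Restriction) (C : Learner → Prop) (P : Informant → Prop)
    (β : InteractionOperator) (δ : Restriction) : Set (Set (Set ℕ)) :=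
  {𝓛 | ∃ h : Learner, Partrec h ∧ C h ∧
        (∀ I : Informant, IsInf I → P I → α (β h I) I) ∧
        ∀ L ∈ 𝓛, LearnsWith P β δ h L}

/-! ### Properties of restrictions -/

/-- A learning restriction is delayable if it is preserved under postponing
hypotheses along a non-decreasing unbounded function. -/
def Delayable (δ : Restriction) : Prop :=
  ∀ I I' : Informant, IsInf I → IsInf I' → Set.range I = Set.range I' →
    ∀ (p : HypSeq) (s : ℕ → ℕ), Monotone s → (∀ m, ∃ n, m ≤ s n) →
      δ p I → (∀ n, contentS (segment I (s n)) ⊆ contentS (segment I' n)) →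
      δ (fun n => p (s n)) I'

/-- A learning restriction is semantic if it is indifferent to replacing the
hypothesis sequence by a semantically equivalent one. -/
def Semantic (δ : Restriction) : Prop :=
  ∀ (p p' : HypSeq) (I : Informant), δ p I →
    (∀ i, (p i).Dom ↔ (p' i).Dom) →
    (∀ i, ∀ e ∈ p i, ∀ e' ∈ p' i, W e = W e') →
    δ p' I


/-! ### Helper lemmas -/

theorem exists_learner (P : Seq → ℕ → Bool) (hP : Primrec₂ P) :
    ∃ h : Learner, Partrec h ∧ ∀ σ : Seq, ∃ e, h (Encodable.encode σ) = Part.some e ∧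
      ∀ x, x ∈ W e ↔ P σ x = true := by
  have hF : Computable (fun q : ℕ => (Encodable.decode (α := Seq) q.unpair.1).bind
      (fun σ => if P σ q.unpair.2 = true then some 0 else none) : ℕ → Option ℕ) := by
    apply Primrec.to_comp
    refine Primrec.option_bind (Primrec.decode.comp (Primrec.fst.comp Primrec.unpair)) ?_
    refine Primrec.ite ?_ (Primrec.const _) (Primrec.const _)
    have hb : Primrec (fun p : ℕ × Seq => P p.2 p.1.unpair.2) :=
      hP.comp Primrec.snd (Primrec.snd.comp (Primrec.unpair.comp Primrec.fst))
    exact Primrec.eq.comp hb (Primrec.const true)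
  have hpart := hF.ofOption
  obtain ⟨c, hc⟩ := Nat.Partrec.Code.exists_code.1 (Partrec.nat_iff.1 hpart)
  refine ⟨fun n => Part.some (Encodable.encode (Nat.Partrec.Code.curry c n)), ?_, ?_⟩
  · have : Primrec (fun n : ℕ => Encodable.encode (Nat.Partrec.Code.curry c n)) :=
      Primrec.encode.comp (Nat.Partrec.Code.primrec₂_curry.comp (Primrec.const c) Primrec.id)
    exact this.to_comp
  · intro σ
    refine ⟨_, rfl, fun x => ?_⟩
    show ((Denumerable.ofNat Nat.Partrec.Code _).eval x).Dom ↔ _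
    rw [Denumerable.ofNat_encode, Nat.Partrec.Code.eval_curry, hc]
    by_cases h : P σ x = true <;> simp [h]

/-- Extension of a finite sequence to an informant for `L`. -/
noncomputable def ext (σ : Seq) (L : Set ℕ) : Informant := fun i =>
  if h : i < σ.length then σ[i] else (i - σ.length, decide (i - σ.length ∈ L))

theorem mem_segment {I : Informant} {n : ℕ} {a : Datum} :
    a ∈ segment I n ↔ ∃ i < n, I i = a := by
  simp [segment]

theorem segment_length (I : Informant) (n : ℕ) : (segment I n).length = n := by
  simp [segment]

theorem segment_mono {I : Informant} {s t : ℕ} (h : s ≤ t) {a : Datum}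
    (ha : a ∈ segment I s) : a ∈ segment I t := by
  rw [mem_segment] at *
  obtain ⟨i, hi, h'⟩ := ha
  exact ⟨i, by omega, h'⟩

theorem segment_ext (σ : Seq) (L : Set ℕ) : segment (ext σ L) σ.length = σ := by
  apply List.ext_getElem
  · simp [segment]
  · intro i h1 h2
    simp [segment, ext, h2]

theorem segment_ext_segment (I : Informant) (L : Set ℕ) {s t : ℕ} (h : s ≤ t) :
    segment (ext (segment I t) L) s = segment I s := by
  apply List.ext_getElem
  · simp [segment]
  · intro i h1 h2
    have : i < t := by simp [segment] at h1; omega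
    simp [segment, ext, this]

theorem ext_values {σ : Seq} {L : Set ℕ} (hσ : ∀ x b, (x, b) ∈ σ → (b = true ↔ x ∈ L))
    (i x : ℕ) (b : Bool) (hi : ext σ L i = (x, b)) : b = true ↔ x ∈ L := by
  unfold ext at hi
  split_ifs at hi with h
  · exact hσ x b (hi ▸ List.getElem_mem h)
  · obtain ⟨rfl, rfl⟩ := Prod.mk.inj hi
    simp

theorem ext_hits (σ : Seq) (L : Set ℕ) (x : ℕ) : ext σ L (σ.length + x) = (x, decide (x ∈ L)) := by
  simp [ext]

theorem ext_isInformant {σ : Seq} {L : Set ℕ}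
    (hσ : ∀ x b, (x, b) ∈ σ → (b = true ↔ x ∈ L)) : IsInformant (ext σ L) L := by
  constructor
  · ext x
    constructor
    · rintro ⟨n, hn⟩
      simpa using ext_values hσ n x true hn
    · intro hx
      exact ⟨σ.length + x, by rw [ext_hits]; simp [hx]⟩
  · ext x
    constructor
    · rintro ⟨n, hn⟩
      simpa using ext_values hσ n x false hn
    · intro hx
      exact ⟨σ.length + x, by rw [ext_hits]; simpa using hx⟩

theorem exists_fresh (τ : Seq) (B : Set ℕ) (hB : B.Finite) :
    ∃ m, m ∉ B ∧ ∀ x b, (x, b) ∈ τ → x ≠ m := by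
  have hf : (B ∪ {x | x ∈ τ.map Prod.fst}).Finite := hB.union (List.finite_toSet _)
  obtain ⟨m, hm⟩ := hf.exists_notMem
  refine ⟨m, fun h => hm (Or.inl h), ?_⟩
  rintro x b hx rfl
  exact hm (Or.inr (List.mem_map.2 ⟨_, hx, rfl⟩))

theorem finite_values (σ : Seq) (b : Bool) : {x | (x, b) ∈ σ}.Finite := by
  refine (List.finite_toSet (σ.map Prod.fst)).subset ?_
  intro x hx
  exact List.mem_map.2 ⟨_, hx, rfl⟩

theorem eventually_mem {I : Informant} {S : Set ℕ} (hS : S.Finite) {b : Bool}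
    (h : ∀ x ∈ S, ∃ n, I n = (x, b)) : ∀ᶠ n in atTop, ∀ x ∈ S, (x, b) ∈ segment I n := by
  rw [Set.Finite.eventually_all hS]
  intro x hx
  obtain ⟨n, hn⟩ := h x hx
  filter_upwards [eventually_gt_atTop n] with k hk
  exact mem_segment.2 ⟨n, hk, hn⟩

theorem learnsWith_of (δ : Restriction) (h : Learner) (L : Set ℕ)
    (H : ∀ I : Informant, IsInformant I L → δ (Gop h I) I ∧ Bc (Gop h I) I) :
    LearnsWith AllI Gop (fun p I => δ p I ∧ Bc p I) h L := by
  refine ⟨?_, fun I _ hI => H I hI⟩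
  have hI : IsInformant (ext [] L) L := ext_isInformant (by simp)
  obtain ⟨n, e, _, he⟩ := (H _ hI).2.exists
  exact ⟨e, he.trans hI.1⟩

theorem segment_sound {I : Informant} {L : Set ℕ} (hI : IsInformant I L) {n x : ℕ} {b : Bool}
    (h : (x, b) ∈ segment I n) : b = true ↔ x ∈ L := by
  obtain ⟨i, _, hi⟩ := mem_segment.1 h
  cases b
  · have : x ∈ negI I := ⟨i, hi⟩
    rw [hI.2] at this
    simpa using this
  · have : x ∈ posI I := ⟨i, hi⟩
    rw [hI.1] at this
    simpa using this

/-- The full language together with all finite languages. -/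
def classFin : Set (Set ℕ) := {L | L = Set.univ ∨ L.Finite}

/-- The empty language together with all cofinite languages. -/
def classCof : Set (Set ℕ) := {L | L = ∅ ∨ Lᶜ.Finite}

/-- Membership test for the learner of `classFin`. -/
def testFin (σ : Seq) (x : ℕ) : Bool := σ.any (fun a => a == (x, true)) || σ.all (fun a => a.2)

/-- Membership test for the learner of `classCof`. -/
def testCof (σ : Seq) (x : ℕ) : Bool :=
  !(σ.any (fun a => a == (x, false))) && !(σ.all (fun a => !a.2))

theorem primrec_any (b : Bool) :
    Primrec₂ (fun (σ : Seq) (x : ℕ) => σ.any (fun a => a == (x, b))) := by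
  have h : Primrec₂ (fun (σ : Seq) (x : ℕ) => (σ.foldl (fun r a => r || (a == (x, b))) false)) := by
    refine Primrec.list_foldl (α := Seq × ℕ) (σ := Bool) (f := fun p => p.1)
      (g := fun _ => false) (h := fun p q => q.1 || (q.2 == (p.2, b)))
      Primrec.fst (Primrec.const false) ?_
    have h1 : Primrec (fun p : (Seq × ℕ) × (Bool × Datum) => p.2.1) :=
      Primrec.fst.comp Primrec.snd
    have h2 : Primrec (fun p : (Seq × ℕ) × (Bool × Datum) => p.2.2) :=
      Primrec.snd.comp Primrec.snd
    have h3 : Primrec (fun p : (Seq × ℕ) × (Bool × Datum) => ((p.1.2, b) : Datum)) :=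
      Primrec.pair (Primrec.snd.comp Primrec.fst) (Primrec.const b)
    have h4 : Primrec (fun p : (Seq × ℕ) × (Bool × Datum) => p.2.2 == (p.1.2, b)) :=
      (Primrec.beq.comp h2 h3).of_eq fun p => by
        change decide (p.2.2 = (p.1.2, b)) = _
        rw [Bool.eq_iff_iff, beq_iff_eq, decide_eq_true_iff]
    exact Primrec.or.comp h1 h4
  refine h.of_eq fun σ x => ?_
  have key : ∀ (l : Seq) (r : Bool), l.foldl (fun r a => r || (a == (x, b))) r =
      (r || l.any (fun a => a == (x, b))) := by
    intro l
    induction l with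
    | nil => simp
    | cons a l ih => intro r; rw [List.foldl_cons, ih, List.any_cons, Bool.or_assoc]
  simpa using key σ false

theorem primrec_all (f : Bool → Bool) :
    Primrec (fun (σ : Seq) => σ.all (fun a => f a.2)) := by
  have h : Primrec (fun (σ : Seq) => (σ.foldl (fun r a => r && f a.2) true)) := by
    refine Primrec.list_foldl (α := Seq) (σ := Bool) (f := fun p => p)
      (g := fun _ => true) (h := fun _ q => q.1 && f q.2.2)
      Primrec.id (Primrec.const true) ?_
    refine Primrec.and.comp (Primrec.fst.comp Primrec.snd) ?_
    exact (Primrec.dom_finite f).comp (Primrec.snd.comp (Primrec.snd.comp Primrec.snd))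
  refine h.of_eq fun σ => ?_
  have key : ∀ (l : Seq) (r : Bool), l.foldl (fun r a => r && f a.2) r =
      (r && l.all (fun a => f a.2)) := by
    intro l
    induction l with
    | nil => simp
    | cons a l ih => intro r; rw [List.foldl_cons, ih, List.all_cons, Bool.and_assoc]
  simpa using key σ true

theorem primrec_testFin : Primrec₂ testFin :=
  Primrec.or.comp₂ (primrec_any true) ((primrec_all id).comp Primrec.fst)

theorem primrec_testCof : Primrec₂ testCof :=
  Primrec.and.comp₂ (Primrec.not.comp (primrec_any false))
    (Primrec.not.comp ((primrec_all not).comp Primrec.fst))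

theorem testFin_iff (σ : Seq) (x : ℕ) :
    testFin σ x = true ↔ ((x, true) ∈ σ ∨ ∀ y, (y, false) ∉ σ) := by
  simp [testFin]

theorem testCof_iff (σ : Seq) (x : ℕ) :
    testCof σ x = true ↔ ((x, false) ∉ σ ∧ ∃ y, (y, true) ∈ σ) := by
  simp only [testCof, Bool.and_eq_true, Bool.not_eq_true', List.any_eq_false, List.all_eq_false]
  constructor
  · rintro ⟨h1, ⟨y, b⟩, hy, hb⟩
    refine ⟨fun hx => h1 _ hx (by simp), y, ?_⟩
    cases b
    · simp at hb
    · exact hy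
  · rintro ⟨h1, y, hy⟩
    refine ⟨fun a ha hax => h1 ?_, (y, true), hy, by simp⟩
    rw [beq_iff_eq] at hax
    exact hax ▸ ha

theorem classFin_mond :
    classFin ∈ Learnable TT AllL AllI Gop (fun p I => Mond p I ∧ Bc p I) := by
  obtain ⟨h, hh, H⟩ := exists_learner testFin primrec_testFin
  refine ⟨h, hh, trivial, fun _ _ _ => trivial, fun L hL => learnsWith_of _ _ _ fun I hI => ?_⟩
  choose e he hW using H
  simp only [testFin_iff] at hW
  have hG : ∀ n, Gop h I n = Part.some (e (segment I n)) := fun n => he _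
  constructor
  · intro s t hst a ha b hb x hx
    rw [hG, Part.mem_some_iff] at ha hb
    subst ha hb
    refine ⟨fun hxt => hx.1 ?_, hx.2⟩
    have hxL : x ∉ L := by have := hx.2; rwa [hI.2] at this
    rw [hW] at hxt ⊢
    rcases hxt with h1 | h1
    · exact absurd ((segment_sound hI h1).1 rfl) hxL
    · exact Or.inr fun y hy => h1 y (segment_mono hst hy)
  · rcases hL with rfl | hL
    · refine Eventually.of_forall fun n => ⟨_, by rw [hG]; exact Part.mem_some _, ?_⟩
      rw [hI.1]
      ext x
      rw [hW]
      simp only [Set.mem_univ, iff_true]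
      exact Or.inr fun y hy => by simpa using segment_sound hI hy
    · obtain ⟨z, hz⟩ := hL.exists_notMem
      have e1 := eventually_mem (I := I) hL (b := true) (fun x hx => by
        have : x ∈ posI I := by rw [hI.1]; exact hx
        exact this)
      have e2 := eventually_mem (I := I) (Set.finite_singleton z) (b := false) (fun x hx => by
        have : x ∈ negI I := by rw [hI.2, Set.mem_singleton_iff.1 hx]; exact hz
        exact this)
      filter_upwards [e1, e2] with n h1 h2
      refine ⟨_, by rw [hG]; exact Part.mem_some _, ?_⟩
      rw [hI.1]
      ext x
      rw [hW]
      constructor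
      · rintro (h3 | h3)
        · exact (segment_sound hI h3).1 rfl
        · exact absurd (h2 z rfl) (h3 z)
      · exact fun hx => Or.inl (h1 x hx)

theorem classCof_mon :
    classCof ∈ Learnable TT AllL AllI Gop (fun p I => Mon p I ∧ Bc p I) := by
  obtain ⟨h, hh, H⟩ := exists_learner testCof primrec_testCof
  refine ⟨h, hh, trivial, fun _ _ _ => trivial, fun L hL => learnsWith_of _ _ _ fun I hI => ?_⟩
  choose e he hW using H
  simp only [testCof_iff] at hW
  have hG : ∀ n, Gop h I n = Part.some (e (segment I n)) := fun n => he _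
  constructor
  · intro s t hst a ha b hb x hx
    rw [hG, Part.mem_some_iff] at ha hb
    subst ha hb
    refine ⟨?_, hx.2⟩
    have hxL : x ∈ L := by have := hx.2; rwa [hI.1] at this
    have hxs := hx.1
    rw [hW] at hxs ⊢
    obtain ⟨_, y, hy⟩ := hxs
    exact ⟨fun h1 => by simpa using (segment_sound hI h1).2 hxL, y, segment_mono hst hy⟩
  · rcases hL with rfl | hL
    · refine Eventually.of_forall fun n => ⟨_, by rw [hG]; exact Part.mem_some _, ?_⟩
      rw [hI.1]
      ext x
      rw [hW]
      simp only [Set.mem_empty_iff_false, iff_false]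
      rintro ⟨_, y, hy⟩
      simpa using segment_sound hI hy
    · obtain ⟨z, hz⟩ := hL.exists_notMem
      rw [Set.mem_compl_iff, not_not] at hz
      have e1 := eventually_mem (I := I) hL (b := false) (fun x hx => by
        have : x ∈ negI I := by rw [hI.2]; exact hx
        exact this)
      have e2 := eventually_mem (I := I) (Set.finite_singleton z) (b := true) (fun x hx => by
        have : x ∈ posI I := by rw [hI.1, Set.mem_singleton_iff.1 hx]; exact hz
        exact this)
      filter_upwards [e1, e2] with n h1 h2
      refine ⟨_, by rw [hG]; exact Part.mem_some _, ?_⟩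
      rw [hI.1]
      ext x
      rw [hW]
      constructor
      · rintro ⟨h3, _⟩
        by_contra hx
        exact h3 (h1 x hx)
      · exact fun hx => ⟨fun h3 => by simpa using (segment_sound hI h3).2 hx, z, h2 z rfl⟩

/-- Forcing two hypotheses: first for `A`, then for `B`, on a common sequence `τ`. -/
theorem force {δ : Restriction} {h : Learner} {𝓛 : Set (Set ℕ)}
    (hL : ∀ L ∈ 𝓛, LearnsWith AllI Gop (fun p I => δ p I ∧ Bc p I) h L)
    (A : Set ℕ) (hA : A ∈ 𝓛) (B : Seq → Set ℕ) (hB : ∀ σ, B σ ∈ 𝓛)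
    (hAB : ∀ σ : Seq, (∀ x b, (x, b) ∈ σ → (b = true ↔ x ∈ A)) →
      ∀ x b, (x, b) ∈ σ → (b = true ↔ x ∈ B σ)) :
    ∃ (σ τ : Seq) (s t e₀ e₁ : ℕ), s ≤ t ∧ W e₀ = A ∧ W e₁ = B σ ∧
      (∀ x b, (x, b) ∈ τ → (b = true ↔ x ∈ B σ)) ∧
      ∀ C, e₀ ∈ Gop h (ext τ C) s ∧ e₁ ∈ Gop h (ext τ C) t := by
  have hI0 : IsInformant (ext [] A) A := ext_isInformant (by simp)
  obtain ⟨s, e₀, he₀, hW₀⟩ := ((hL A hA).2 _ trivial hI0).2.exists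
  set σ := segment (ext [] A) s with hσ
  have hI1 : IsInformant (ext σ (B σ)) (B σ) :=
    ext_isInformant (hAB σ fun x b hx => segment_sound hI0 hx)
  obtain ⟨t, ⟨e₁, he₁, hW₁⟩, hst⟩ :=
    (((hL _ (hB σ)).2 _ trivial hI1).2.and (eventually_ge_atTop s)).exists
  refine ⟨σ, segment (ext σ (B σ)) t, s, t, e₀, e₁, hst, hW₀.trans hI0.1, hW₁.trans hI1.1,
    fun x b hx => segment_sound hI1 hx, fun C => ⟨?_, ?_⟩⟩
  · unfold Gop at he₀ ⊢
    rw [segment_ext_segment _ _ hst, hσ, segment_ext_segment _ _ le_rfl]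
    exact he₀
  · unfold Gop at he₁ ⊢
    rw [segment_ext_segment _ _ le_rfl]
    exact he₁

theorem classFin_not_mon :
    classFin ∉ Learnable TT AllL AllI Gop (fun p I => Mon p I ∧ Bc p I) := by
  rintro ⟨h, _, _, _, hL⟩
  obtain ⟨σ, τ, s, t, e₀, e₁, hst, hW₀, hW₁, hτ, hC⟩ := force hL Set.univ (Or.inl rfl)
    (fun σ => {x | (x, true) ∈ σ}) (fun σ => Or.inr (finite_values σ true)) (by
      intro σ hσ x b hx
      have hb : b = true := (hσ x b hx).2 trivial
      subst hb
      simpa using hx)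
  obtain ⟨m, hmB, hmτ⟩ := exists_fresh τ _ (finite_values σ true)
  have hI : IsInformant (ext τ (insert m {x | (x, true) ∈ σ})) (insert m {x | (x, true) ∈ σ}) :=
    ext_isInformant (fun x b hx => by
      rw [hτ x b hx, Set.mem_insert_iff]
      simp [hmτ x b hx])
  have hm := (hL _ (Or.inr ((finite_values σ true).insert m))).2 _ trivial hI
  have := hm.1 s t hst e₀ (hC _).1 e₁ (hC _).2
  rw [hW₀, hW₁, hI.1] at this
  exact hmB (this ⟨trivial, Set.mem_insert _ _⟩).1

theorem classCof_not_mond :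
    classCof ∉ Learnable TT AllL AllI Gop (fun p I => Mond p I ∧ Bc p I) := by
  rintro ⟨h, _, _, _, hL⟩
  obtain ⟨σ, τ, s, t, e₀, e₁, hst, hW₀, hW₁, hτ, hC⟩ := force hL ∅ (Or.inl rfl)
    (fun σ => {x | (x, false) ∈ σ}ᶜ)
    (fun σ => Or.inr (by rw [compl_compl]; exact finite_values σ false)) (by
      intro σ hσ x b hx
      have hb : b = false := by
        cases b
        · rfl
        · exact absurd ((hσ x true hx).1 rfl) (Set.notMem_empty x)
      subst hb
      simpa using hx)
  obtain ⟨m, hmB, hmτ⟩ := exists_fresh τ _ (finite_values σ false)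
  have hI : IsInformant (ext τ (insert m {x | (x, false) ∈ σ})ᶜ)
      (insert m {x | (x, false) ∈ σ})ᶜ :=
    ext_isInformant (fun x b hx => by
      rw [hτ x b hx, Set.mem_compl_iff, Set.mem_compl_iff, Set.mem_insert_iff]
      simp [hmτ x b hx])
  have hm := (hL _ (Or.inr (by
    rw [compl_compl]; exact (finite_values σ false).insert m))).2 _ trivial hI
  have := hm.1 s t hst e₀ (hC _).1 e₁ (hC _).2
  rw [hW₀, hW₁, hI.2, compl_compl, compl_compl] at this
  exact hmB (this ⟨Set.notMem_empty m, Set.mem_insert _ _⟩).1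

/-- `[Inf G Mon Bc]` and `[Inf G Mon^d Bc]` are incomparable. -/
theorem mon_dual_mon_incomparable :
    (Learnable TT AllL AllI Gop (fun p I => Mon p I ∧ Bc p I) \
      Learnable TT AllL AllI Gop (fun p I => Mond p I ∧ Bc p I)).Nonempty ∧
    (Learnable TT AllL AllI Gop (fun p I => Mond p I ∧ Bc p I) \
      Learnable TT AllL AllI Gop (fun p I => Mon p I ∧ Bc p I)).Nonempty := by
  exact ⟨⟨classCof, classCof_mon, classCof_not_mond⟩, ⟨classFin, classFin_mond, classFin_not_mon⟩⟩

end InfBc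
end

section
/- Global consistency does not restrict set-driven behaviorally correct learning from informants: [τ(Cons) Inf Sd Bc] = [Inf Sd Bc]. -/
open Filter Classical

namespace InfBc

/-! ### Proof material -/

/-- The list of data coded by a number. -/
def dl (n : ℕ) : List Datum := (Encodable.decode (α := List Datum) n).getD []

lemma mem_dl (s : Finset Datum) (a : Datum) : a ∈ dl (Encodable.encode s) ↔ a ∈ s := by
  have h1 : Encodable.encode s = Encodable.encode s.val := rfl
  have h2 : Encodable.decode (α := Multiset Datum) (Encodable.encode s.val) = some s.val :=
    Encodable.encodek _
  have h3 : Encodable.decode (α := Multiset Datum) (Encodable.encode s.val)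
      = (Encodable.decode (α := List Datum) (Encodable.encode s.val)).map
          ((↑) : List Datum → Multiset Datum) := rfl
  rw [h3] at h2
  obtain ⟨l, hl, hs⟩ := Option.map_eq_some_iff.1 h2
  rw [h1, dl, hl, Option.getD_some, ← Finset.mem_val, ← hs, Multiset.mem_coe]

lemma primrec_dl : Primrec dl :=
  Primrec.option_getD.comp Primrec.decode (Primrec.const [])

lemma mem_rel : PrimrecRel fun (L : List Datum) (b : Datum) => b ∈ L := by
  have h : PrimrecRel fun (L : List Datum) (b : Datum) => ∃ a ∈ L, a = b :=
    PrimrecRel.exists_mem_list Primrec.eq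
  simpa using h

lemma comp_mem (b : Bool) :
    Computable fun p : ℕ × ℕ => decide (((p.2, b) : Datum) ∈ dl p.1) := by
  have h : PrimrecPred fun p : ℕ × ℕ => ((p.2, b) : Datum) ∈ dl p.1 :=
    mem_rel.comp (primrec_dl.comp Primrec.fst) (Primrec.snd.pair (Primrec.const b))
  exact h.decide.to_comp

/-- The patched enumeration procedure. -/
noncomputable def patch (h : Learner) : ℕ × ℕ →. ℕ := fun p =>
  bif decide (((p.2, true) : Datum) ∈ dl p.1) then Part.some 0 else
  bif decide (((p.2, false) : Datum) ∈ dl p.1) then Part.none else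
  (h p.1).bind fun e => (Denumerable.ofNat Nat.Partrec.Code e).eval p.2

lemma partrec_patch {h : Learner} (hh : Partrec h) : Partrec (patch h) := by
  refine Partrec.cond (comp_mem true) (Computable.const 0).partrec
    (Partrec.cond (comp_mem false) Partrec.none
      (Partrec.bind (hh.comp Computable.fst) ?_))
  exact Nat.Partrec.Code.eval_part.comp
    ((Computable.ofNat _).comp Computable.snd) (Computable.snd.comp Computable.fst)

lemma exists_patched {h : Learner} (hh : Partrec h) :
    ∃ g : ℕ → ℕ, Computable g ∧ ∀ n x, x ∈ W (g n) ↔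
      ((x, true) ∈ dl n ∨ ((x, false) ∉ dl n ∧ ∃ e ∈ h n, x ∈ W e)) := by
  have h1 : Partrec fun m : ℕ => patch h (Nat.unpair m) :=
    (partrec_patch hh).comp Computable.unpair
  obtain ⟨c, hc⟩ := Nat.Partrec.Code.exists_code.1 (Partrec.nat_iff.1 h1)
  refine ⟨fun n => Encodable.encode (c.curry n),
    (Primrec.encode.comp
      (Nat.Partrec.Code.primrec₂_curry.comp (Primrec.const c) Primrec.id)).to_comp, ?_⟩
  intro n x
  simp only [W, Set.mem_setOf_eq, Denumerable.ofNat_encode, Nat.Partrec.Code.eval_curry, hc,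
    Nat.unpair_pair, patch]
  by_cases ht : ((x, true) : Datum) ∈ dl n
  · simp [ht]
  · by_cases hf : ((x, false) : Datum) ∈ dl n
    · simp [ht, hf]
    · simp only [ht, hf, decide_false, cond_false, Part.bind_dom, false_or, not_false_eq_true,
        true_and]
      constructor
      · rintro ⟨hd, he⟩
        exact ⟨_, Part.get_mem hd, he⟩
      · rintro ⟨e, he, hx⟩
        obtain ⟨hd, rfl⟩ := he
        exact ⟨hd, hx⟩

lemma mem_dl_segment (I : Informant) (n : ℕ) (a : Datum) :
    a ∈ dl (Encodable.encode (segment I n).toFinset) ↔ a ∈ segment I n := by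
  rw [mem_dl, List.mem_toFinset]

lemma segment_range {I : Informant} {n : ℕ} {a : Datum} (h : a ∈ segment I n) :
    ∃ k, I k = a := by
  obtain ⟨k, _, hk⟩ := List.mem_map.1 h
  exact ⟨k, hk⟩

/-- `[τ(Cons) Inf Sd Bc] = [Inf Sd Bc]`. -/
theorem global_cons_no_restriction_sd_bc :
    Learnable Cons AllL AllI Sdop Bc = Learnable TT AllL AllI Sdop Bc := by
  ext 𝓛
  constructor
  · rintro ⟨h, hp, hC, _, hL⟩
    exact ⟨h, hp, hC, fun _ _ _ => trivial, hL⟩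
  · rintro ⟨h, hp, -, -, hL⟩
    obtain ⟨g, hg, hW⟩ := exists_patched hp
    refine ⟨fun n => Part.some (g n), hg.partrec, trivial, ?_, ?_⟩
    · intro I hI _ n
      refine ⟨_, Part.mem_some _, ?_, ?_⟩
      · intro x hx
        rw [hW]
        exact Or.inl ((mem_dl_segment I n _).2 hx)
      · ext x
        simp only [Set.mem_inter_iff, Set.mem_empty_iff_false, iff_false, not_and]
        intro hx hx'
        rw [hW, mem_dl_segment, mem_dl_segment] at hx'
        rcases hx' with h1 | ⟨h1, -⟩
        · have hn : x ∈ negI I := segment_range hx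
          rw [hI.2] at hn
          exact hn (segment_range h1)
        · exact h1 hx
    · intro L hLm
      obtain ⟨hre, hlearn⟩ := hL L hLm
      refine ⟨hre, fun I hPI hI => ?_⟩
      refine (hlearn I hPI hI).mono ?_
      rintro n ⟨e, he, hWe⟩
      refine ⟨_, Part.mem_some _, ?_⟩
      ext x
      rw [hW, mem_dl_segment, mem_dl_segment]
      constructor
      · rintro (h1 | ⟨-, e', he', hx⟩)
        · exact segment_range h1
        · rw [Part.mem_unique he' he, hWe] at hx
          exact hx
      · intro hx
        refine Or.inr ⟨fun hf => ?_, e, he, hWe ▸ hx⟩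
        have hn : x ∈ negI I := segment_range hf
        rw [hI.2, ← hI.1] at hn
        exact hn hx

end InfBc
end
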